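/- In F_2[T], the sum ∑_{P ∈ P_1} 1/(P − 1) over all monic irreducible polynomials P, interpreted as a convergent sum of formal Laurent series in T^{-1}, equals 0. -/

import Mathlib

/-!
For a finite family `x` in a field of characteristic two, let `e₁`, `e₂` be its first two elementary
symmetric functions. The family of all products of two families `x`, `y` satisfies
`e₂(xy) = e₁(x)² e₂(y) + e₂(x) e₁(y)²` (`esymm_two_prod`), so `e₂ / e₁²` turns products of families
into sums. For the geometric family `1, u, …, u ^ (N - 1)` this quotient is
`u / (1 + u) + u ^ N / (1 + u ^ N)` (`esymm_two_geom`).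

By unique factorization, the reciprocals of the polynomials `∏ P ^ k_P` with `P` in a finite set `S`
of irreducibles and `k_P < N` form the product of the geometric families with `u = 1 / P`. Hence
(`exists_smooth`) `e₂ / e₁²` of this family `D` is the partial sum `∑_{P ∈ S} 1 / (P - 1)`, up to an
error of valuation at least `N`.

On the other hand, `e₂` of the reciprocals of the nonzero polynomials of degree `< n` vanishes
(`esymm_two_recip_eq_zero`): the pairs `{A, B}` group into triples from `{A, B, A + B}`, and
`1/(AB) + 1/(A(A+B)) + 1/(B(A+B)) = 0`. If `N = n` and `S` contains all irreducibles of degree `< n`,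
then `D` consists of these polynomials and of others of degree at least `n`, so `e₂(D)` has valuation
at least `n`, while `e₁(D)` is a unit. So the partial sum over `S` has valuation at least `n`
(`valuation_partial_sum_le`), which gives convergence to `0`.
-/

open Polynomial

/-- The element `T` inside the field of formal Laurent series in `T⁻¹`. -/
noncomputable def TT (F : Type) [Field F] : LaurentSeries F := HahnSeries.single (-1) 1

/-- The embedding of `F[T]` into `K̂ = F((T⁻¹))`. -/
noncomputable def polyEmb (F : Type) [Field F] : Polynomial F →+* LaurentSeries F :=
  Polynomial.eval₂RingHom HahnSeries.C (TT F)

open WithZero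
/-! ### Second elementary symmetric function in characteristic two -/

section
variable {K : Type*} [Field K]

theorem esymm_two_zero : (0 : Multiset K).esymm 2 = 0 := by
  simp only [Multiset.esymm, Multiset.powersetCard_zero_right, Multiset.map_zero,
    Multiset.sum_zero]

theorem sum_map_mul (a : K) (t : Multiset K) : (t.map (a * ·)).sum = a * t.sum := by
  simpa using Multiset.sum_map_mul_left (s := t) (a := a) (f := fun x => x)

theorem esymm_two_cons (a : K) (m : Multiset K) :
    (a ::ₘ m).esymm 2 = m.esymm 2 + a * m.sum := by
  simp [Multiset.esymm, Multiset.powersetCard_cons, Multiset.powersetCard_one,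
    sum_map_mul]

theorem esymm_two_add (s t : Multiset K) :
    (s + t).esymm 2 = s.esymm 2 + t.esymm 2 + s.sum * t.sum := by
  induction s using Multiset.induction_on with
  | empty => simp [esymm_two_zero]
  | cons a s ih =>
    rw [Multiset.cons_add, esymm_two_cons, esymm_two_cons, ih, Multiset.sum_add, Multiset.sum_cons]
    ring

theorem esymm_two_map_mul (a : K) (t : Multiset K) :
    (t.map (a * ·)).esymm 2 = a ^ 2 * t.esymm 2 := by
  have := Multiset.pow_smul_esymm a 2 t
  simpa using this.symm

/-- In characteristic two, `e₂ / e₁²` is additive for products of families. -/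
theorem esymm_two_prod [CharP K 2] (s t : Multiset K) :
    (s.bind fun a => t.map (a * ·)).esymm 2 =
      s.sum ^ 2 * t.esymm 2 + s.esymm 2 * t.sum ^ 2 := by
  induction s using Multiset.induction_on with
  | empty => simp [esymm_two_zero]
  | cons a s ih =>
    rw [Multiset.cons_bind, esymm_two_add, esymm_two_map_mul, ih, esymm_two_cons,
      Multiset.sum_cons, Multiset.sum_bind]
    simp only [sum_map_mul]
    rw [Multiset.sum_map_mul_right, Multiset.map_id']
    linear_combination (-a * s.sum * t.esymm 2) * (CharTwo.two_eq_zero (R := K))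

theorem sum_geom (u : K) (hu : 1 + u ≠ 0) [CharP K 2] (N : ℕ) :
    ((Multiset.range N).map (u ^ ·)).sum = (1 + u ^ N) / (1 + u) := by
  rw [eq_div_iff hu]
  induction N with
  | zero => simp [CharTwo.add_self_eq_zero]
  | succ N ih =>
    rw [Multiset.range_succ, Multiset.map_cons, Multiset.sum_cons, add_mul, ih]
    linear_combination (u ^ N) * (CharTwo.two_eq_zero (R := K))

theorem esymm_two_geom [CharP K 2] (u : K) (hu : 1 + u ≠ 0) (N : ℕ) (hN : 1 + u ^ N ≠ 0) :
    ((Multiset.range N).map (u ^ ·)).esymm 2 =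
      ((Multiset.range N).map (u ^ ·)).sum ^ 2 * (u / (1 + u) + u ^ N / (1 + u ^ N)) := by
  have key : ((Multiset.range N).map (u ^ ·)).esymm 2 =
      (1 + u ^ N) * (u + u ^ N) / (1 + u) ^ 3 := by
    clear hN
    rw [eq_div_iff (pow_ne_zero _ hu)]
    induction N with
    | zero => simp [esymm_two_zero, CharTwo.add_self_eq_zero]
    | succ N ih =>
      rw [Multiset.range_succ, Multiset.map_cons, esymm_two_cons, add_mul, ih, sum_geom u hu]
      field_simp
      linear_combination (u ^ N + u ^ N * u ^ N + u ^ (N + 1) + u * u ^ N * u ^ N) * (CharTwo.two_eq_zero (R := K))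
  rw [key, sum_geom u hu]
  field_simp
  linear_combination (- u * u ^ N) * (CharTwo.two_eq_zero (R := K))

/-- A sum over unordered pairs becomes a sum over ordered pairs when each term splits as
`h a b + h b a`. -/
theorem esymm_two_eq_sum_offDiag {ι : Type*} [DecidableEq ι] (s : Finset ι) (f : ι → K)
    (h : ι → ι → K) (hf : ∀ a ∈ s, ∀ b ∈ s, a ≠ b → f a * f b = h a b + h b a) :
    (s.val.map f).esymm 2 = ∑ p ∈ s.offDiag, h p.1 p.2 := by
  induction s using Finset.induction_on with
  | empty => simp [esymm_two_zero]
  | insert a s ha ih =>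
    rw [Finset.insert_val_of_notMem ha, Multiset.map_cons, esymm_two_cons,
      ih fun x hx y hy => hf x (Finset.mem_insert_of_mem hx) y (Finset.mem_insert_of_mem hy),
      Finset.offDiag_insert ha, Finset.sum_union, Finset.sum_union]
    · rw [Finset.sum_product, Finset.sum_product, Finset.sum_singleton]
      simp only [Finset.sum_singleton]
      rw [add_assoc, ← Finset.sum_add_distrib]
      congr 1
      rw [← Finset.sum_eq_multiset_sum, Finset.mul_sum]
      exact Finset.sum_congr rfl fun b hb => hf a (Finset.mem_insert_self a s) b
        (Finset.mem_insert_of_mem hb) fun hab => ha (hab ▸ hb)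
    · rw [Finset.disjoint_left]
      rintro ⟨x, y⟩
      simp only [Finset.mem_offDiag, Finset.mem_product, Finset.mem_singleton]
      rintro ⟨hx, -⟩ ⟨rfl, -⟩
      exact ha hx
    · rw [Finset.disjoint_left]
      rintro ⟨x, y⟩
      simp only [Finset.mem_offDiag, Finset.mem_product, Finset.mem_singleton, Finset.mem_union]
      rintro (⟨-, hy, -⟩ | ⟨-, hy⟩) ⟨-, rfl⟩
      · exact ha hy
      · exact ha hy
end

/-! ### Reciprocals of polynomials -/

instance : CharP (LaurentSeries (ZMod 2)) 2 :=
  charP_of_injective_ringHom (f := (HahnSeries.C : ZMod 2 →+* LaurentSeries (ZMod 2)))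
    HahnSeries.C_injective 2

/-- The reciprocal of a polynomial, taken in `F₂((T⁻¹))`. -/
noncomputable def recip (A : (ZMod 2)[X]) : LaurentSeries (ZMod 2) := (polyEmb (ZMod 2) A)⁻¹

/-- The valuation on `F₂((T⁻¹))` restricts to the degree valuation on `F₂[T]`. -/
theorem valuation_polyEmb {A : (ZMod 2)[X]} (hA : A ≠ 0) :
    Valued.v (polyEmb (ZMod 2) A) = exp (A.natDegree : ℤ) := by
  have hT : (Valued.v (TT (ZMod 2)) : ℤᵐ⁰) = exp (1 : ℤ) := by
    simpa [TT] using LaurentSeries.valuation_single_zpow (ZMod 2) (-1)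
  have h := valuation_aeval_eq_valuation_X_pow_natDegree_of_one_lt_valuation_X
    (v := (Valued.v : Valuation (LaurentSeries (ZMod 2)) ℤᵐ⁰)) (A := ZMod 2)
    (TT (ZMod 2)) (by rw [hT, ← exp_zero, exp_lt_exp]; norm_num) hA
  rw [hT, ← exp_nsmul] at h
  have e : aeval (TT (ZMod 2)) A = polyEmb (ZMod 2) A := by
    rw [aeval_def, polyEmb, coe_eval₂RingHom, Subsingleton.elim (algebraMap _ _) HahnSeries.C]
  rw [← e, h]
  simp

theorem polyEmb_injective : Function.Injective (polyEmb (ZMod 2)) := by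
  rw [injective_iff_map_eq_zero]
  intro A hA
  by_contra h
  have := valuation_polyEmb h
  rw [hA, map_zero] at this
  exact exp_ne_zero this.symm

theorem valuation_recip {A : (ZMod 2)[X]} (hA : A ≠ 0) :
    Valued.v (recip A) = exp (-(A.natDegree : ℤ)) := by
  rw [recip, map_inv₀, valuation_polyEmb hA, exp_neg]

theorem polyEmb_ne_zero {A : (ZMod 2)[X]} (hA : A ≠ 0) : polyEmb (ZMod 2) A ≠ 0 :=
  (map_ne_zero_iff _ polyEmb_injective).2 hA

theorem poly_add_self (A : (ZMod 2)[X]) : A + A = 0 := CharTwo.add_self_eq_zero A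

/-- `e₂` of the reciprocals of the nonzero elements of an additive subgroup of `F₂[T]` is zero. -/
theorem esymm_two_recip_eq_zero (V : Finset (ZMod 2)[X]) (h0 : ∀ A ∈ V, A ≠ 0)
    (hadd : ∀ A ∈ V, ∀ B ∈ V, A ≠ B → A + B ∈ V) : (V.val.map recip).esymm 2 = 0 := by
  classical
  have hne : ∀ {A B : (ZMod 2)[X]}, A ≠ B → A + B ≠ 0 := fun {A B} h e =>
    h (CharTwo.add_eq_zero.1 e)
  rw [esymm_two_eq_sum_offDiag V recip fun A B => recip A * recip (A + B)]
  -- After `1/(AB) = 1/(A(A+B)) + 1/(B(B+A))`, the ordered pairs `(A, B)` and `(A + B, B)` cancel.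
  · refine Finset.sum_involution (fun p _ => (p.1 + p.2, p.2)) ?_ ?_ ?_ ?_
    · rintro ⟨A, B⟩ -
      have : A + B + B = A := by rw [add_assoc, poly_add_self, add_zero]
      simp only [this]
      rw [mul_comm (recip (A + B)), CharTwo.add_self_eq_zero]
    · rintro ⟨A, B⟩ hp - h
      simp only [Prod.mk.injEq, add_eq_left, and_true] at h
      exact h0 B (Finset.mem_offDiag.1 hp).2.1 h
    · rintro ⟨A, B⟩ hp
      obtain ⟨hA, hB, hAB⟩ := Finset.mem_offDiag.1 hp
      refine Finset.mem_offDiag.2 ⟨hadd A hA B hB hAB, hB, fun h => h0 A hA ?_⟩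
      simpa using h
    · rintro ⟨A, B⟩ -
      simp [add_assoc, poly_add_self]
  · intro A hA B hB hAB
    have h1 := polyEmb_ne_zero (h0 A hA)
    have h2 := polyEmb_ne_zero (h0 B hB)
    have h3 := polyEmb_ne_zero (hne hAB)
    have h4 := polyEmb_ne_zero (hne hAB.symm)
    rw [add_comm B A]
    simp only [recip]
    rw [map_add] at h3 ⊢
    field_simp
    ring

/-! ### Smooth polynomials -/

/-- The set `𝒫₁` of monic irreducible polynomials, as a subtype. -/
abbrev MonicIrred := {P : (ZMod 2)[X] // P.Monic ∧ Irreducible P}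

theorem monic_of_ne_zero {A : (ZMod 2)[X]} (hA : A ≠ 0) : A.Monic := by
  have : ∀ a : ZMod 2, a ≠ 0 → a = 1 := by decide
  exact this _ (leadingCoeff_ne_zero.2 hA)

theorem eq_of_dvd {P Q : MonicIrred} (h : P.1 ∣ Q.1) : P = Q :=
  Subtype.ext <| eq_of_monic_of_associated P.2.1 Q.2.1 (P.2.2.associated_of_dvd Q.2.2 h)

theorem recip_mul_pow (P A : (ZMod 2)[X]) (k : ℕ) : recip (P ^ k * A) = recip P ^ k * recip A := by
  simp [recip, mul_comm]

theorem one_add_recip_pow_ne_zero (P : MonicIrred) {N : ℕ} (hN : N ≠ 0) :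
    1 + recip P.1 ^ N ≠ 0 := by
  intro h
  have h1 : recip P.1 ^ N = 1 := (CharTwo.add_eq_zero.1 h).symm
  rw [recip, inv_pow, inv_eq_one, ← map_pow, ← map_one (polyEmb (ZMod 2))] at h1
  exact P.2.2.not_isUnit ((isUnit_pow_iff hN).1 (polyEmb_injective h1 ▸ isUnit_one))

/-- The set `D` is that of the products `∏ P ^ k_P` with `P ∈ S` and `k_P < N`; only its smoothness and
the fact that it contains every `S`-smooth polynomial of degree `< N` are recorded, together with
the value of `e₂ / e₁²` on its reciprocals. -/
theorem exists_smooth (N : ℕ) (hN : N ≠ 0) (S : Finset MonicIrred) :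
    ∃ D : Finset (ZMod 2)[X],
      (∀ A ∈ D, A ≠ 0 ∧ ∀ Q : MonicIrred, Q.1 ∣ A → Q ∈ S) ∧
      (∀ A, A ≠ 0 → A.natDegree < N → (∀ Q : MonicIrred, Q.1 ∣ A → Q ∈ S) → A ∈ D) ∧
      (D.val.map recip).esymm 2 = (D.val.map recip).sum ^ 2 *
        ∑ P ∈ S, (recip P.1 / (1 + recip P.1) + recip P.1 ^ N / (1 + recip P.1 ^ N)) := by
  classical
  induction S using Finset.induction_on with
  | empty =>
    refine ⟨{1}, ?_, ?_, ?_⟩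
    · intro A hA
      rw [Finset.mem_singleton.1 hA]
      refine ⟨one_ne_zero, fun Q hQ => absurd (isUnit_of_dvd_one hQ) Q.2.2.not_isUnit⟩
    · intro A hA _ h
      have hu : IsUnit A := by
        by_contra hu
        obtain ⟨Q, hQ, hQA⟩ := WfDvdMonoid.exists_irreducible_factor hu hA
        simpa using h ⟨Q, monic_of_ne_zero hQ.ne_zero, hQ⟩ hQA
      exact Finset.mem_singleton.2 ((monic_of_ne_zero hA).isUnit_iff.1 hu)
    · have := esymm_two_cons (recip 1) 0
      simpa [esymm_two_zero] using this
  | insert P S hP ih =>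
    obtain ⟨D, h1, h2, h3⟩ := ih
    have hPD : ∀ A ∈ D, ¬ P.1 ∣ A := fun A hA h => hP ((h1 A hA).2 P h)
    have hP0 : P.1 ≠ 0 := P.2.2.ne_zero
    have hlt : ∀ {k l : ℕ} {A B : (ZMod 2)[X]}, A ∈ D → P.1 ^ k * A = P.1 ^ l * B → l ≤ k := by
      intro k l A B hA h
      by_contra! hkl
      obtain ⟨d, rfl⟩ := Nat.exists_eq_add_of_lt hkl
      rw [add_assoc, pow_add, mul_assoc] at h
      have h := mul_left_cancel₀ (pow_ne_zero k hP0) h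
      exact hPD A hA (h ▸ (dvd_pow_self P.1 (Nat.succ_ne_zero d)).mul_right B)
    have hinj : Set.InjOn (fun p : ℕ × (ZMod 2)[X] => P.1 ^ p.1 * p.2)
        (Finset.range N ×ˢ D : Finset _) := by
      rintro ⟨k, A⟩ hA ⟨l, B⟩ hB h
      simp only [Finset.coe_product, Set.mem_prod, Finset.mem_coe] at hA hB h
      obtain rfl : k = l := le_antisymm (hlt hB.2 h.symm) (hlt hA.2 h)
      rw [mul_left_cancel₀ (pow_ne_zero k hP0) h]
    refine ⟨(Finset.range N ×ˢ D).image fun p => P.1 ^ p.1 * p.2, ?_, ?_, ?_⟩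
    · intro A hA
      simp only [Finset.mem_image, Finset.mem_product, Prod.exists] at hA
      obtain ⟨k, B, ⟨-, hB⟩, rfl⟩ := hA
      refine ⟨mul_ne_zero (pow_ne_zero k hP0) (h1 B hB).1, fun Q hQ => ?_⟩
      rcases Q.2.2.prime.dvd_or_dvd hQ with h | h
      · rw [eq_of_dvd (Q.2.2.prime.dvd_of_dvd_pow h)]
        exact Finset.mem_insert_self P S
      · exact Finset.mem_insert_of_mem ((h1 B hB).2 Q h)
    · intro A hA hdeg hdvd
      obtain ⟨B, hAB, hB⟩ :=
        (FiniteMultiplicity.of_not_isUnit P.2.2.not_isUnit hA).exists_eq_pow_mul_and_not_dvd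
      generalize multiplicity P.1 A = k at hAB
      subst hAB
      have hB0 : B ≠ 0 := right_ne_zero_of_mul hA
      rw [natDegree_mul (pow_ne_zero k hP0) hB0, natDegree_pow] at hdeg
      have hk : k ≤ k * P.1.natDegree := Nat.le_mul_of_pos_right k P.2.2.natDegree_pos
      refine Finset.mem_image.2 ⟨(k, B), Finset.mem_product.2 ⟨Finset.mem_range.2 (by omega),
        h2 B hB0 (by omega) fun Q hQ => ?_⟩, rfl⟩
      refine (Finset.mem_insert.1 (hdvd Q (hQ.mul_left _))).resolve_left ?_
      rintro rfl
      exact hB hQ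
    · have hm : (((Finset.range N ×ˢ D).image fun p => P.1 ^ p.1 * p.2).val.map recip) =
          ((Multiset.range N).map (recip P.1 ^ ·)).bind
            fun a => (D.val.map recip).map (a * ·) := by
        rw [Finset.image_val_of_injOn hinj, Finset.product_val, Multiset.map_map]
        rw [show (Finset.range N).val ×ˢ D.val =
          (Finset.range N).val.bind fun a => D.val.map (Prod.mk a) from rfl]
        rw [Multiset.map_bind, Multiset.bind_map]
        simp only [Multiset.map_map, Function.comp_def, recip_mul_pow, Finset.range_val]
      have hs : (((Multiset.range N).map (recip P.1 ^ ·)).bind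
            fun a => (D.val.map recip).map (a * ·)).sum =
          ((Multiset.range N).map (recip P.1 ^ ·)).sum * (D.val.map recip).sum := by
        rw [Multiset.sum_bind]
        simp only [sum_map_mul]
        rw [Multiset.sum_map_mul_right, Multiset.map_id']
      rw [hm, esymm_two_prod, hs, h3, Finset.sum_insert hP, esymm_two_geom (recip P.1)
        (by simpa using one_add_recip_pow_ne_zero P one_ne_zero) N
        (one_add_recip_pow_ne_zero P hN)]
      ring

/-! ### Convergence -/

theorem valuation_multiset_le {K : Type*} [Field K] (v : Valuation K ℤᵐ⁰) {g : ℤᵐ⁰} (hg : g ≤ 1)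
    (m : Multiset K) (hm : ∀ x ∈ m, v x ≤ g) : v m.sum ≤ g ∧ v (m.esymm 2) ≤ g := by
  induction m using Multiset.induction_on with
  | empty => simp [esymm_two_zero]
  | cons a m ih =>
    obtain ⟨h1, h2⟩ := ih fun x hx => hm x (Multiset.mem_cons_of_mem hx)
    have ha := hm a (Multiset.mem_cons_self a m)
    rw [Multiset.sum_cons, esymm_two_cons]
    refine ⟨v.map_add_le ha h1, v.map_add_le h2 ?_⟩
    rw [map_mul]
    exact (mul_le_mul' ha h1).trans (mul_le_of_le_one_right' hg)

/-- The term of `1 ∈ D` dominates, all other terms having positive order in `T⁻¹`. -/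
theorem valuation_sum_recip {D : Finset (ZMod 2)[X]} (h0 : ∀ A ∈ D, A ≠ 0) (h1 : 1 ∈ D) :
    Valued.v (D.val.map recip).sum = (1 : ℤᵐ⁰) := by
  classical
  rw [← Finset.insert_erase h1, Finset.insert_val_of_notMem (Finset.notMem_erase 1 D),
    Multiset.map_cons, Multiset.sum_cons]
  have hr : recip 1 = 1 := by simp [recip]
  rw [hr]
  refine Valuation.map_one_add_of_lt _ (lt_of_le_of_lt (b := exp (-1 : ℤ)) ?_ ?_)
  · refine (valuation_multiset_le _ ?_ _ ?_).1
    · rw [← exp_zero, exp_le_exp]; norm_num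
    · intro x hx
      obtain ⟨A, hA, rfl⟩ := Multiset.mem_map.1 hx
      obtain ⟨hA1, hA⟩ := Finset.mem_erase.1 hA
      rw [valuation_recip (h0 A hA), exp_le_exp]
      have : A.natDegree ≠ 0 := fun h =>
        hA1 ((monic_of_ne_zero (h0 A hA)).natDegree_eq_zero.1 h)
      omega
  · rw [← exp_zero, exp_lt_exp]; norm_num

/-- Partial sums over sets containing all irreducibles of degree `< n` are `O(T⁻ⁿ)`. -/
theorem valuation_partial_sum_le (n : ℕ) (hn : n ≠ 0) (S : Finset MonicIrred)
    (hS : ∀ P : MonicIrred, P.1.natDegree < n → P ∈ S) :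
    Valued.v (∑ P ∈ S, recip P.1 / (1 + recip P.1)) ≤ exp (-(n : ℤ)) := by
  classical
  obtain ⟨D, h1, h2, h3⟩ := exists_smooth n hn S
  have hn1 : exp (-(n : ℤ)) ≤ (1 : ℤᵐ⁰) := by rw [← exp_zero, exp_le_exp]; omega
  have hD : ∀ A : (ZMod 2)[X], A ≠ 0 → A.natDegree < n → A ∈ D := fun A hA hd =>
    h2 A hA hd fun Q hQ => hS Q ((natDegree_le_of_dvd hQ hA).trans_lt hd)
  have hsum := valuation_sum_recip (fun A hA => (h1 A hA).1)
    (hD 1 one_ne_zero (by simpa using Nat.pos_of_ne_zero hn))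
  have hval : ∀ A ∈ D, ∀ m : ℕ, m ≤ A.natDegree → Valued.v (recip A) ≤ exp (-(m : ℤ)) := by
    intro A hA m hm
    rw [valuation_recip (h1 A hA).1, exp_le_exp]
    omega
  have hsplit : (D.val.map recip) =
      ((D.filter (·.natDegree < n)).val.map recip) +
        ((D.filter (¬ ·.natDegree < n)).val.map recip) := by
    rw [← Multiset.map_add, Finset.filter_val, Finset.filter_val, Multiset.filter_add_not]
  -- The part of degree `< n` is the set of all nonzero polynomials of degree `< n`.
  have hV : ((D.filter (·.natDegree < n)).val.map recip).esymm 2 = 0 := by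
    refine esymm_two_recip_eq_zero _ (fun A hA => (h1 A (Finset.mem_filter.1 hA).1).1) ?_
    intro A hA B hB hAB
    have hd := (natDegree_add_le A B).trans_lt
      (max_lt (Finset.mem_filter.1 hA).2 (Finset.mem_filter.1 hB).2)
    exact Finset.mem_filter.2 ⟨hD _ (fun h => hAB (CharTwo.add_eq_zero.1 h)) hd, hd⟩
  have hV1 : Valued.v ((D.filter (·.natDegree < n)).val.map recip).sum ≤ (1 : ℤᵐ⁰) := by
    refine (valuation_multiset_le _ le_rfl _ fun x hx => ?_).1
    obtain ⟨A, hA, rfl⟩ := Multiset.mem_map.1 hx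
    simpa using hval A (Finset.mem_filter.1 hA).1 0 (Nat.zero_le _)
  have hR := valuation_multiset_le Valued.v hn1
    ((D.filter (¬ ·.natDegree < n)).val.map recip) fun x hx => by
      obtain ⟨A, hA, rfl⟩ := Multiset.mem_map.1 hx
      obtain ⟨hA, hd⟩ := Finset.mem_filter.1 hA
      exact hval A hA n (not_lt.1 hd)
  have he2 : Valued.v ((D.val.map recip).esymm 2) ≤ exp (-(n : ℤ)) := by
    rw [hsplit, esymm_two_add, hV, zero_add]
    refine Valuation.map_add_le _ hR.2 ?_
    rw [map_mul]
    exact (mul_le_mul' hV1 hR.1).trans (one_mul _).le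
  have herr : Valued.v (∑ P ∈ S, recip P.1 ^ n / (1 + recip P.1 ^ n)) ≤ exp (-(n : ℤ)) := by
    refine Valuation.map_sum_le _ fun P _ => ?_
    have hP : Valued.v (recip P.1 ^ n) ≤ exp (-(n : ℤ)) := by
      rw [map_pow, valuation_recip P.2.2.ne_zero, ← exp_nsmul, exp_le_exp, nsmul_eq_mul]
      have := P.2.2.natDegree_pos
      nlinarith
    have hlt : exp (-(n : ℤ)) < (1 : ℤᵐ⁰) := by rw [← exp_zero, exp_lt_exp]; omega
    rw [map_div₀, Valuation.map_one_add_of_lt _ (hP.trans_lt hlt), div_one]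
    exact hP
  rw [h3, Finset.sum_add_distrib, map_mul, map_pow, hsum, one_pow, one_mul] at he2
  simpa using Valuation.map_sub_le _ he2 herr

theorem finite_natDegree_lt (n : ℕ) : {A : (ZMod 2)[X] | A.natDegree < n}.Finite := by
  have : Finite (degreeLT (ZMod 2) n) := Finite.of_equiv _ (degreeLTEquiv (ZMod 2) n).symm.toEquiv
  refine (Set.toFinite (degreeLT (ZMod 2) n : Set (ZMod 2)[X])).subset fun A hA => ?_
  exact mem_degreeLT.2 (degree_le_natDegree.trans_lt (by exact_mod_cast hA))

/-- In characteristic two, `1 / (P - 1) = P⁻¹ / (1 + P⁻¹)`. -/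
theorem hasSum_recip : HasSum (fun P : MonicIrred => recip P.1 / (1 + recip P.1)) 0 := by
  classical
  refine (Valued.hasBasis_nhds_zero _ _).tendsto_right_iff.2 fun γ _ => ?_
  obtain ⟨n, hn0, hn⟩ : ∃ n : ℕ, n ≠ 0 ∧
      exp (-(n : ℤ)) < MonoidWithZeroHom.ValueGroup₀.embedding γ.1 := by
    refine ⟨(log (MonoidWithZeroHom.ValueGroup₀.embedding γ.1)).natAbs + 1, by simp, ?_⟩
    rw [← lt_log_iff_exp_lt (by simp)]
    omega
  have hfin : {P : MonicIrred | P.1.natDegree < n}.Finite :=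
    (finite_natDegree_lt n).preimage Subtype.val_injective.injOn
  filter_upwards [Filter.eventually_ge_atTop hfin.toFinset] with S hS
  refine (Valuation.restrict_lt_iff_lt_embedding _).2 (lt_of_le_of_lt ?_ hn)
  exact valuation_partial_sum_le n hn0 S fun P hP => hS (hfin.mem_toFinset.2 hP)

/-- In `F₂[T]`, the sum `∑_{P ∈ 𝒫₁} 1/(P - 1)` over all monic irreducible polynomials,
taken in `K̂ = F₂((T⁻¹))`, equals `0`. -/
theorem thakur_sum_char_two_eq_zero :
    ∑' P : {P : Polynomial (ZMod 2) // P.Monic ∧ Irreducible P},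
      (polyEmb (ZMod 2) (P : Polynomial (ZMod 2)) - 1)⁻¹ = 0 := by
  rw [← hasSum_recip.tsum_eq]
  refine tsum_congr fun P => ?_
  have h0 := polyEmb_ne_zero P.2.2.ne_zero
  rw [recip, CharTwo.sub_eq_add]
  field_simp
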